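/- Let n ≥ 2, let p be a real polynomial of degree n such that every real zero of p is simple and p′ has n − 1 distinct real zeros ξ₁ < ⋯ < ξ_{n−1}, and let 0 ≤ κ < (n−1)/n. If ξ_{k−1} < ξ_k are consecutive zeros of p′ and the open interval (ξ_{k−1}, ξ_k) contains a zero of p, then the number of roots of H_κ[p] in (ξ_{k−1}, ξ_k) counted with multiplicity is 0 or 2. -/

import Mathlib

/-!
Write `q = p'`, a polynomial with only real simple zeros, and let `(a, b)` be a gap between two
consecutive zeros of `q` which contains a zero `c` of `p`. By Laguerre's inequality `q' / q` is
strictly decreasing on `(a, b)`, so `q' = p''` has exactly one zero `d` there, and `p` has only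
the zero `c` because it is strictly monotone.

If `κ = 0` then `H = -p p''` has exactly the two simple roots `c` and `d` in `(a, b)` (a double root
if `c = d`).

If `κ > 0`, a root of `H = κ p'² - p p''` satisfies `p p'' > 0`, which by the signs of `p` and `p''`
places it strictly between `c` and `d`. Since `H > 0` at `c` and at `d`, the number of roots is
even (`even_ZIcount_iff`), and it remains to show that it is at most three. This follows from three
applications of Rolle's theorem with multiplicities (`ZIcount_le_of_wronskian`), based on

* `(H / p'')' = -q K / p''²` with `K = (1 - 2κ) q'² + κ q q''`,
* `(K / q'²)' = κ M / q'³` with `M = q'³ (q q'' / q'²)'`,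
* `(M / q'³)' = T / q'⁴` with `T = q'⁴ (q q'' / q'²)''`.

Finally `T < 0` wherever `q ≠ 0` (`Tpoly_neg`). Indeed, with `yᵢ = 1 / (x - ξᵢ)` and the power sums
`sₖ = ∑ yᵢᵏ` one has `T = -6 q⁴ (s₁² s₄ - 2 s₁ s₂ s₃ + s₂³) = -6 q⁴ ∑ yᵢ² (s₁ yᵢ - s₂)²`, which is
nonzero because there are at least two distinct `yᵢ`.
-/

open Polynomial

/-- `Hk κ p = κ·(p')² − p·p''`. -/
noncomputable def Hk (κ : ℝ) (p : ℝ[X]) : ℝ[X] :=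
  C κ * (derivative p) ^ 2 - p * derivative (derivative p)

/-- `Zreal q` : number of real roots of `q` counted with multiplicity. -/
noncomputable def Zreal (q : ℝ[X]) : ℕ := Multiset.card q.roots

/-- `Zcomplex q` : number of non-real complex roots of `q` counted with multiplicity. -/
noncomputable def Zcomplex (q : ℝ[X]) : ℕ :=
  Multiset.card ((q.map (algebraMap ℝ ℂ)).roots.filter (fun z => z.im ≠ 0))

/-- Number of real zeros of `Q_κ[p] = H_κ[p]/(p')²` counted with multiplicity. -/
noncomputable def ZQ (κ : ℝ) (p : ℝ[X]) : ℕ :=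
  ∑ᶠ x : ℝ, (rootMultiplicity x (Hk κ p) - 2 * rootMultiplicity x (derivative p))

open scoped Classical in
/-- `ZIcount I q` : number of roots of `q` in the set `I` counted with multiplicity. -/
noncomputable def ZIcount (I : Set ℝ) (q : ℝ[X]) : ℕ :=
  Multiset.card (q.roots.filter (fun x => x ∈ I))

/-- `Zdist q` : number of distinct real roots of `q`. -/
noncomputable def Zdist (q : ℝ[X]) : ℕ := q.roots.toFinset.card

/-! ### Counting roots in an interval -/

open scoped Classical in
lemma ZIcount_eq_sum (I : Set ℝ) (q : ℝ[X]) :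
    ZIcount I q = ∑ x ∈ q.roots.toFinset.filter (fun x => x ∈ I), rootMultiplicity x q := by
  unfold ZIcount
  rw [← Multiset.toFinset_sum_count_eq, Multiset.toFinset_filter]
  refine Finset.sum_congr rfl fun x hx => ?_
  rw [Multiset.count_filter_of_pos (p := fun x => x ∈ I) (Finset.mem_filter.1 hx).2, count_roots]

lemma ZIcount_congr {I J : Set ℝ} {q : ℝ[X]} (h : ∀ x, q.IsRoot x → (x ∈ I ↔ x ∈ J)) :
    ZIcount I q = ZIcount J q := by
  classical
  unfold ZIcount
  congr 1
  refine Multiset.filter_congr fun x hx => ?_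
  exact h x (isRoot_of_mem_roots hx)

lemma ZIcount_eq_zero {I : Set ℝ} {q : ℝ[X]} (h : ∀ x ∈ I, q.eval x ≠ 0) : ZIcount I q = 0 := by
  classical
  unfold ZIcount
  rw [Multiset.card_eq_zero, Multiset.filter_eq_nil]
  exact fun x hx hI => h x hI (isRoot_of_mem_roots hx)

lemma ZIcount_pos {I : Set ℝ} {q : ℝ[X]} (hq : q ≠ 0) {x : ℝ} (hx : x ∈ I) (h : q.eval x = 0) :
    1 ≤ ZIcount I q := by
  classical
  unfold ZIcount
  exact Multiset.card_pos_iff_exists_mem.2 ⟨x, Multiset.mem_filter.2 ⟨(mem_roots hq).2 h, hx⟩⟩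

lemma ZIcount_mul {I : Set ℝ} {q r : ℝ[X]} (h : q * r ≠ 0) :
    ZIcount I (q * r) = ZIcount I q + ZIcount I r := by
  classical
  unfold ZIcount
  rw [roots_mul h, Multiset.filter_add, Multiset.card_add]

lemma ZIcount_X_sub_C {I : Set ℝ} {x : ℝ} (h : x ∈ I) : ZIcount I (X - C x) = 1 := by
  classical
  unfold ZIcount
  rw [roots_X_sub_C, Multiset.filter_singleton, if_pos h, Multiset.card_singleton]

/-- The parity of the number of roots between `u` and `v` is decided by the signs at `u`, `v`. -/
lemma even_ZIcount_iff {u v : ℝ} (huv : u < v) (m : ℕ) : ∀ P : ℝ[X], P.natDegree ≤ m →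
    P.eval u * P.eval v ≠ 0 → (Even (ZIcount (Set.Ioo u v) P) ↔ 0 < P.eval u * P.eval v) := by
  induction m with
  | zero =>
    intro P hP h0
    rw [eq_C_of_natDegree_le_zero hP] at h0 ⊢
    simp only [eval_C] at h0 ⊢
    rw [ZIcount_eq_zero (by simpa using fun x _ _ => left_ne_zero_of_mul h0)]
    simpa using lt_of_le_of_ne (mul_self_nonneg _) h0.symm
  | succ m ih =>
    intro P hP h0
    by_cases hr : ∃ x ∈ Set.Ioo u v, P.eval x = 0
    · obtain ⟨x, hx, hx0⟩ := hr
      obtain ⟨Q, rfl⟩ := dvd_iff_isRoot.2 hx0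
      have hQ : Q ≠ 0 := by rintro rfl; simp at h0
      have hne : (X - C x) * Q ≠ 0 := mul_ne_zero (X_sub_C_ne_zero x) hQ
      rw [natDegree_mul (X_sub_C_ne_zero x) hQ, natDegree_X_sub_C] at hP
      simp only [eval_mul, eval_sub, eval_X, eval_C] at h0 ⊢
      have hQ0 : Q.eval u * Q.eval v ≠ 0 := by
        intro h; apply h0; linear_combination ((u - x) * (v - x)) * h
      rw [ZIcount_mul hne, ZIcount_X_sub_C hx, add_comm, Nat.even_add_one,
        ih Q (by omega) hQ0, not_lt]
      have e : (u - x) * Q.eval u * ((v - x) * Q.eval v)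
          = ((x - u) * (v - x)) * -(Q.eval u * Q.eval v) := by ring
      have hpos : 0 < (x - u) * (v - x) := mul_pos (sub_pos.2 hx.1) (sub_pos.2 hx.2)
      rw [e, mul_pos_iff_of_pos_left hpos, neg_pos]
      exact ⟨fun h => lt_of_le_of_ne h hQ0, le_of_lt⟩
    · push Not at hr
      rw [ZIcount_eq_zero hr]
      refine iff_of_true (by simp) ?_
      by_contra hneg
      have hneg' : P.eval u * P.eval v < 0 := lt_of_le_of_ne (not_lt.1 hneg) h0
      have hc : ContinuousOn (fun x => P.eval x) (Set.Icc u v) := P.continuous.continuousOn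
      rcases mul_neg_iff.1 hneg' with ⟨h1, h2⟩ | ⟨h1, h2⟩
      · obtain ⟨x, hx, hx0⟩ := intermediate_value_Ioo' huv.le hc ⟨h2, h1⟩
        exact hr x hx hx0
      · obtain ⟨x, hx, hx0⟩ := intermediate_value_Ioo huv.le hc ⟨h1, h2⟩
        exact hr x hx hx0

/-- Rolle's theorem with multiplicities for the quotient `P / Q`, whose derivative has numerator
`E * N`: if `Q` and `E` have no zeros in the interval, then `P` has at most one more root there
than `N`. -/
lemma ZIcount_le_of_wronskian {a b : ℝ} {P Q E N : ℝ[X]} (hN : N ≠ 0)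
    (hQ : ∀ x ∈ Set.Ioo a b, Q.eval x ≠ 0) (hE : ∀ x ∈ Set.Ioo a b, E.eval x ≠ 0)
    (h : Q * derivative P - derivative Q * P = E * N) :
    ZIcount (Set.Ioo a b) P ≤ ZIcount (Set.Ioo a b) N + 1 := by
  classical
  have hsum : ∀ q : ℝ[X], ZIcount (Set.Ioo a b) q
      = ∑ x ∈ q.roots.toFinset.filter (fun x => x ∈ Set.Ioo a b), rootMultiplicity x q :=
    fun q => by rw [ZIcount_eq_sum]; congr!
  rw [hsum, hsum]
  set s := P.roots.toFinset.filter (fun x => x ∈ Set.Ioo a b) with hs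
  set t := N.roots.toFinset.filter (fun x => x ∈ Set.Ioo a b) with ht
  -- distinct roots of `P` interleave with roots of `N`
  have hrolle : s.card ≤ (t \ s).card + 1 := by
    refine Finset.card_le_sdiff_of_interleaved fun x hx y hy hxy _ => ?_
    simp only [hs, Finset.mem_filter, Multiset.mem_toFinset] at hx hy
    have hsub : ∀ z, x ≤ z → z ≤ y → z ∈ Set.Ioo a b := fun z h1 h2 =>
      ⟨hx.2.1.trans_le h1, h2.trans_lt hy.2.2⟩
    have hder : ∀ z ∈ Set.Ioo a b, HasDerivAt (fun z => P.eval z / Q.eval z)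
        (((derivative P).eval z * Q.eval z - P.eval z * (derivative Q).eval z) / Q.eval z ^ 2) z :=
      fun z hz => (P.hasDerivAt z).div (Q.hasDerivAt z) (hQ z hz)
    have hPx : P.eval x = 0 := isRoot_of_mem_roots hx.1
    have hPy : P.eval y = 0 := isRoot_of_mem_roots hy.1
    obtain ⟨z, hz, hz0⟩ := exists_hasDerivAt_eq_zero hxy
      (fun z hz => (hder z (hsub z hz.1 hz.2)).continuousAt.continuousWithinAt)
      (by simp [hPx, hPy]) (fun z hz => hder z (hsub z hz.1.le hz.2.le))
    have hzI := hsub z hz.1.le hz.2.le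
    refine ⟨z, ?_, hz⟩
    simp only [ht, Finset.mem_filter, Multiset.mem_toFinset, mem_roots hN]
    refine ⟨?_, hzI⟩
    have h1 := (div_eq_zero_iff.1 hz0).resolve_right (pow_ne_zero 2 (hQ z hzI))
    have h2 := congrArg (eval z) h
    simp only [eval_sub, eval_mul] at h2
    exact (mul_eq_zero.1 (show E.eval z * N.eval z = 0 by linarith)).resolve_left (hE z hzI)
  -- a multiple root of `P` is a root of `N` of multiplicity at least one less
  have hmult : ∀ x ∈ s, rootMultiplicity x P ≤ rootMultiplicity x N + 1 := by
    intro x hx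
    simp only [hs, Finset.mem_filter, Multiset.mem_toFinset] at hx
    have h1 : (X - C x) ^ (rootMultiplicity x P - 1) ∣ P :=
      (pow_dvd_pow _ (Nat.sub_le _ _)).trans (pow_rootMultiplicity_dvd P x)
    have h2 : (X - C x) ^ (rootMultiplicity x P - 1) ∣ derivative P :=
      pow_sub_one_dvd_derivative_of_pow_dvd (pow_rootMultiplicity_dvd P x)
    have h3 : (X - C x) ^ (rootMultiplicity x P - 1) ∣ E * N :=
      h ▸ dvd_sub (h2.mul_left _) (h1.mul_left _)
    have hE0 : E ≠ 0 := by rintro rfl; exact hE x hx.2 (by simp)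
    have h4 := (le_rootMultiplicity_iff (mul_ne_zero hE0 hN)).2 h3
    rw [rootMultiplicity_mul (mul_ne_zero hE0 hN), rootMultiplicity_eq_zero (hE x hx.2)] at h4
    omega
  have ht1 : (t \ s).card ≤ ∑ x ∈ t \ s, rootMultiplicity x N := by
    rw [Finset.card_eq_sum_ones]
    refine Finset.sum_le_sum fun x hx => ?_
    have := (Finset.mem_filter.1 (Finset.mem_sdiff.1 hx).1).1
    exact (rootMultiplicity_pos hN).2 (isRoot_of_mem_roots (Multiset.mem_toFinset.1 this))
  have hst : ∑ x ∈ s, rootMultiplicity x N ≤ ∑ x ∈ t ∩ s, rootMultiplicity x N := by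
    rw [Finset.inter_comm, ← Finset.sum_inter_add_sum_sdiff s t]
    have : ∑ x ∈ s \ t, rootMultiplicity x N = 0 := by
      refine Finset.sum_eq_zero fun x hx => rootMultiplicity_eq_zero fun hr => ?_
      rw [Finset.mem_sdiff] at hx
      refine hx.2 (Finset.mem_filter.2 ⟨?_, (Finset.mem_filter.1 hx.1).2⟩)
      exact Multiset.mem_toFinset.2 ((mem_roots hN).2 hr)
    omega
  show ∑ x ∈ s, rootMultiplicity x P ≤ ∑ x ∈ t, rootMultiplicity x N + 1
  calc ∑ x ∈ s, rootMultiplicity x P ≤ ∑ x ∈ s, (rootMultiplicity x N + 1) :=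
        Finset.sum_le_sum hmult
    _ = ∑ x ∈ s, rootMultiplicity x N + s.card := by
        rw [Finset.sum_add_distrib, Finset.card_eq_sum_ones]
    _ ≤ ∑ x ∈ t ∩ s, rootMultiplicity x N + (∑ x ∈ t \ s, rootMultiplicity x N + 1) := by omega
    _ = ∑ x ∈ t, rootMultiplicity x N + 1 := by
        rw [← Finset.sum_inter_add_sum_sdiff t s]; ring

/-! ### Power sums of `1 / (x - ξᵢ)` -/

/-- `psum S k x = ∑_{i ∈ S} (x - i)⁻ᵏ`; for `S` the simple zeros of `q`, `psum S 1 = q' / q`. -/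
noncomputable def psum (S : Finset ℝ) (k : ℕ) (x : ℝ) : ℝ := ∑ i ∈ S, ((x - i)⁻¹) ^ k

lemma hasDerivAt_psum {S : Finset ℝ} {x : ℝ} (hx : x ∉ S) (k : ℕ) :
    HasDerivAt (psum S k) (-k * psum S (k + 1) x) x := by
  unfold psum
  rw [Finset.mul_sum]
  refine HasDerivAt.fun_sum fun i hi => ?_
  have hne : x - i ≠ 0 := sub_ne_zero.2 fun h => hx (h ▸ hi)
  have h1 := ((((hasDerivAt_id x).sub_const i).inv hne).pow k)
  refine h1.congr_deriv ?_
  rcases k with _ | k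
  · simp
  · simp only [Nat.add_sub_cancel, id, Pi.inv_apply]
    rw [neg_div, one_div, ← inv_pow]
    ring

lemma psum_two_pos {S : Finset ℝ} (hS : S.Nonempty) {x : ℝ} (hx : x ∉ S) : 0 < psum S 2 x :=
  Finset.sum_pos (fun i hi => by
    have hne : x - i ≠ 0 := sub_ne_zero.2 fun h => hx (h ▸ hi)
    positivity) hS

/-- With `yᵢ = 1 / (x - i)` the left-hand side equals `∑ yᵢ² (s₁ yᵢ - s₂)²`, which vanishes only
if all `yᵢ` are equal. -/
lemma psum_ineq {S : Finset ℝ} (hS : 1 < S.card) {x : ℝ} (hx : x ∉ S) :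
    0 < psum S 1 x ^ 2 * psum S 4 x - 2 * psum S 1 x * psum S 2 x * psum S 3 x
      + psum S 2 x ^ 3 := by
  have e : psum S 1 x ^ 2 * psum S 4 x - 2 * psum S 1 x * psum S 2 x * psum S 3 x
      + psum S 2 x ^ 3
      = ∑ i ∈ S, ((x - i)⁻¹ * (psum S 1 x * (x - i)⁻¹ - psum S 2 x)) ^ 2 := by
    have : ∀ i ∈ S, ((x - i)⁻¹ * (psum S 1 x * (x - i)⁻¹ - psum S 2 x)) ^ 2
        = psum S 1 x ^ 2 * ((x - i)⁻¹) ^ 4 - 2 * psum S 1 x * psum S 2 x * ((x - i)⁻¹) ^ 3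
          + psum S 2 x ^ 2 * ((x - i)⁻¹) ^ 2 := fun i _ => by ring
    rw [Finset.sum_congr rfl this, Finset.sum_add_distrib, Finset.sum_sub_distrib,
      ← Finset.mul_sum, ← Finset.mul_sum, ← Finset.mul_sum]
    change _ = psum S 1 x ^ 2 * psum S 4 x - 2 * psum S 1 x * psum S 2 x * psum S 3 x
      + psum S 2 x ^ 2 * psum S 2 x
    ring
  rw [e]
  refine lt_of_le_of_ne (Finset.sum_nonneg fun i _ => sq_nonneg _) fun h0 => ?_
  have hz := (Finset.sum_eq_zero_iff_of_nonneg (fun i _ => sq_nonneg _)).1 h0.symm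
  obtain ⟨i, hi, j, hj, hij⟩ := Finset.one_lt_card.1 hS
  have h2 := psum_two_pos ⟨i, hi⟩ hx
  have key : ∀ l ∈ S, psum S 1 x = psum S 2 x * (x - l) := fun l hl => by
    have hne : x - l ≠ 0 := sub_ne_zero.2 fun h => hx (h ▸ hl)
    have h3 := (mul_eq_zero.1 (pow_eq_zero_iff two_ne_zero |>.1 (hz l hl))).resolve_left
      (inv_ne_zero hne)
    field_simp at h3
    linarith
  have h4 := (key i hi).symm.trans (key j hj)
  exact hij (by linarith [mul_left_cancel₀ h2.ne' h4])

/-! ### A real-rooted polynomial with simple zeros -/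

/-- `q = l ∏_{i ∈ S} (X - i)` with leading coefficient `l ≠ 0`: all complex zeros of `q` are real
and simple, and `S` is the set of them. -/
structure SimpleRooted (q : ℝ[X]) (S : Finset ℝ) : Prop where
  lc : q.leadingCoeff ≠ 0
  fac : q = C q.leadingCoeff * ∏ i ∈ S, (X - C i)

namespace SimpleRooted

variable {q : ℝ[X]} {S : Finset ℝ}

lemma eval_eq_zero_iff (h : SimpleRooted q S) (x : ℝ) : q.eval x = 0 ↔ x ∈ S := by
  rw [h.fac]
  simp only [eval_mul, eval_C, eval_prod, eval_sub, eval_X, mul_eq_zero, h.lc, false_or,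
    Finset.prod_eq_zero_iff, sub_eq_zero]
  exact ⟨fun ⟨i, hi, e⟩ => e ▸ hi, fun hx => ⟨x, hx, rfl⟩⟩

lemma deriv1 (h : SimpleRooted q S) {x : ℝ} (hx : x ∉ S) :
    (derivative q).eval x = q.eval x * psum S 1 x := by
  rw [h.fac]
  simp only [derivative_mul, derivative_C, zero_mul, zero_add, eval_mul, eval_C, derivative_prod_finset,
    eval_finsetSum, eval_prod, derivative_sub, derivative_X, sub_zero, mul_one,
    eval_sub, eval_X, psum, pow_one]
  rw [mul_assoc, Finset.mul_sum (a := ∏ i ∈ S, (x - i))]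
  congr 1
  refine Finset.sum_congr rfl fun i hi => ?_
  have hne : x - i ≠ 0 := sub_ne_zero.2 fun h => hx (h ▸ hi)
  rw [← Finset.mul_prod_erase S _ hi]
  field_simp

/-- Differentiates an identity `f = q * g` that holds off the finite set `S`. -/
lemma deriv_step (h : SimpleRooted q S) {f : ℝ[X]} {g : ℝ → ℝ} {g' : ℝ → ℝ}
    (hf : ∀ x ∉ S, f.eval x = q.eval x * g x) (hg : ∀ x ∉ S, HasDerivAt g (g' x) x)
    {x : ℝ} (hx : x ∉ S) :
    (derivative f).eval x = q.eval x * (psum S 1 x * g x + g' x) := by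
  have h1 := (q.hasDerivAt x).mul (hg x hx)
  have hev : (fun y => f.eval y) =ᶠ[nhds x] (fun y => q.eval y) * g := by
    filter_upwards [(S.finite_toSet.isClosed.isOpen_compl).mem_nhds (by simpa using hx)] with y hy
    exact hf y (by simpa using hy)
  have h2 := (f.hasDerivAt x).unique (h1.congr_of_eventuallyEq hev)
  rw [h2, h.deriv1 hx]
  ring

lemma deriv2 (h : SimpleRooted q S) {x : ℝ} (hx : x ∉ S) :
    (derivative (derivative q)).eval x = q.eval x * (psum S 1 x ^ 2 - psum S 2 x) := by
  rw [h.deriv_step (fun y hy => h.deriv1 hy) (fun y hy => hasDerivAt_psum hy 1) hx]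
  push_cast
  ring

lemma deriv3 (h : SimpleRooted q S) {x : ℝ} (hx : x ∉ S) :
    (derivative (derivative (derivative q))).eval x
      = q.eval x * (psum S 1 x ^ 3 - 3 * psum S 1 x * psum S 2 x + 2 * psum S 3 x) := by
  rw [h.deriv_step (fun y hy => h.deriv2 hy)
    (fun y hy => ((hasDerivAt_psum hy 1).fun_pow 2).fun_sub (hasDerivAt_psum hy 2)) hx]
  push_cast
  ring

lemma deriv4 (h : SimpleRooted q S) {x : ℝ} (hx : x ∉ S) :
    (derivative (derivative (derivative (derivative q)))).eval x
      = q.eval x * (psum S 1 x ^ 4 - 6 * psum S 1 x ^ 2 * psum S 2 x + 3 * psum S 2 x ^ 2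
        + 8 * psum S 1 x * psum S 3 x - 6 * psum S 4 x) := by
  rw [h.deriv_step (fun y hy => h.deriv3 hy)
    (fun y hy => (((hasDerivAt_psum hy 1).fun_pow 3).fun_sub
      (((hasDerivAt_psum hy 1).const_mul 3).fun_mul (hasDerivAt_psum hy 2))).fun_add
        ((hasDerivAt_psum hy 3).const_mul 2)) hx]
  push_cast
  ring

/-- Laguerre's inequality: `q' / q` is strictly decreasing between consecutive zeros of `q`. -/
lemma laguerre (h : SimpleRooted q S) (hS : S.Nonempty) {x : ℝ} (hx : x ∉ S) :
    q.eval x * (derivative (derivative q)).eval x - (derivative q).eval x ^ 2 < 0 := by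
  have h0 : q.eval x ≠ 0 := fun h0 => hx ((h.eval_eq_zero_iff x).1 h0)
  have e : q.eval x * (derivative (derivative q)).eval x - (derivative q).eval x ^ 2
      = -(q.eval x ^ 2 * psum S 2 x) := by rw [h.deriv1 hx, h.deriv2 hx]; ring
  rw [e]
  have := psum_two_pos hS hx
  have : 0 < q.eval x ^ 2 := by positivity
  exact neg_neg_of_pos (by positivity)

end SimpleRooted

/-! ### The three Rolle steps -/

/-- `q'³ · (q q'' / q'²)'`. -/
noncomputable def Mpoly (q : ℝ[X]) : ℝ[X] :=
  derivative q ^ 2 * derivative (derivative q)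
    + q * derivative q * derivative (derivative (derivative q))
    - 2 * q * derivative (derivative q) ^ 2

/-- `q'⁴ · (q q'' / q'²)''`. -/
noncomputable def Tpoly (q : ℝ[X]) : ℝ[X] :=
  2 * derivative q ^ 3 * derivative (derivative (derivative q))
    - 6 * q * derivative q * derivative (derivative q) * derivative (derivative (derivative q))
    + q * derivative q ^ 2 * derivative (derivative (derivative (derivative q)))
    - 3 * derivative q ^ 2 * derivative (derivative q) ^ 2
    + 6 * q * derivative (derivative q) ^ 3

/-- `q'² · ((1 - 2κ) + κ q q'' / q'²)`. -/
noncomputable def Kpoly (κ : ℝ) (q : ℝ[X]) : ℝ[X] :=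
  C (1 - 2 * κ) * derivative q ^ 2 + C κ * (q * derivative (derivative q))

/-- As `T = q'⁴ (q q'' / q'²)''` and `(q / q')' = 1 - q q'' / q'²`, this is the strict convexity of
`(q / q')'` away from the zeros of `q` and `q'`. -/
lemma Tpoly_neg {q : ℝ[X]} {S : Finset ℝ} (h : SimpleRooted q S) (hS : 1 < S.card) {x : ℝ}
    (hx : x ∉ S) : (Tpoly q).eval x < 0 := by
  have h0 : q.eval x ≠ 0 := fun h0 => hx ((h.eval_eq_zero_iff x).1 h0)
  have e : (Tpoly q).eval x = -(6 * q.eval x ^ 4 *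
      (psum S 1 x ^ 2 * psum S 4 x - 2 * psum S 1 x * psum S 2 x * psum S 3 x
        + psum S 2 x ^ 3)) := by
    simp only [Tpoly, eval_add, eval_sub, eval_mul, eval_pow, eval_ofNat, h.deriv1 hx,
      h.deriv2 hx, h.deriv3 hx, h.deriv4 hx]
    ring
  rw [e]
  have := psum_ineq hS hx
  have : 0 < q.eval x ^ 4 := by positivity
  exact neg_neg_of_pos (by positivity)

/-- Rolle's theorem is applied to the quotients `H / p''`, `K / q'²` and `M / q'³` with `q = p'`; the
last one has derivative `T / q'⁴`, which has no zeros. -/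
lemma ZIcount_Hk_le_three {p : ℝ[X]} {S : Finset ℝ} (h : SimpleRooted (derivative p) S)
    (hS : 1 < S.card) {κ : ℝ} (hκ : κ ≠ 0) {u v : ℝ} (huv : u < v)
    (hu : ∀ x ∈ Set.Ioo u v, x ∉ S)
    (hd : ∀ x ∈ Set.Ioo u v, (derivative (derivative p)).eval x ≠ 0) :
    ZIcount (Set.Ioo u v) (Hk κ p) ≤ 3 := by
  set q := derivative p with hq
  have hT : ∀ x ∈ Set.Ioo u v, (Tpoly q).eval x ≠ 0 := fun x hx => (Tpoly_neg h hS (hu x hx)).ne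
  obtain ⟨z, hz⟩ : (Set.Ioo u v).Nonempty := Set.nonempty_Ioo.2 huv
  have hT0 : Tpoly q ≠ 0 := fun h0 => hT z hz (by simp [h0])
  have eM : derivative q ^ 3 * derivative (Mpoly q) - derivative (derivative q ^ 3) * Mpoly q
      = derivative q ^ 2 * Tpoly q := by
    simp only [Mpoly, Tpoly, derivative_sub, derivative_add, derivative_mul, derivative_pow,
      derivative_ofNat]
    simp only [map_ofNat, Nat.cast_ofNat]
    ring
  have eK : derivative q ^ 2 * derivative (Kpoly κ q) - derivative (derivative q ^ 2) * Kpoly κ q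
      = (C κ * derivative q) * Mpoly q := by
    simp only [Mpoly, Kpoly, derivative_add, derivative_mul, derivative_pow, derivative_C]
    simp only [map_sub, map_mul, map_one, map_ofNat, Nat.cast_ofNat]
    ring
  have eH : derivative q * derivative (Hk κ p) - derivative (derivative q) * Hk κ p
      = (-q) * Kpoly κ q := by
    simp only [Hk, Kpoly, derivative_mul, derivative_pow, derivative_C, map_sub,
      map_mul, map_one, map_ofNat, Nat.cast_ofNat, ← hq]
    ring
  have hM0 : Mpoly q ≠ 0 := by
    intro h0
    rw [h0] at eM
    have := congrArg (eval z) eM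
    simp only [derivative_zero, mul_zero, sub_zero, eval_zero, eval_mul, eval_pow] at this
    exact mul_ne_zero (pow_ne_zero 2 (hd z hz)) (hT z hz) this.symm
  have hK0 : Kpoly κ q ≠ 0 := by
    intro h0
    rw [h0] at eK
    simp only [derivative_zero, mul_zero, sub_zero] at eK
    have hq0 : derivative q ≠ 0 := fun h1 => hd z hz (by simp [h1])
    exact mul_ne_zero (mul_ne_zero (C_ne_zero.2 hκ) hq0) hM0 eK.symm
  have h1 : ZIcount (Set.Ioo u v) (Mpoly q) ≤ 0 + 1 := by
    rw [← ZIcount_eq_zero hT]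
    exact ZIcount_le_of_wronskian hT0
      (fun x hx => by simpa using hd x hx)
      (fun x hx => by simpa using hd x hx) eM
  have h2 := ZIcount_le_of_wronskian hM0
      (fun x hx => by simpa using hd x hx)
      (fun x hx => by simpa using ⟨hκ, hd x hx⟩) eK
  have h3 := ZIcount_le_of_wronskian hK0 hd
      (fun x hx => by simpa using fun h0 => hu x hx ((h.eval_eq_zero_iff x).1 h0)) eH
  omega

/-! ### One interval between consecutive critical points -/

lemma mul_pos_of_ne_zero {f : ℝ[X]} {a b : ℝ} (h : ∀ x ∈ Set.Ioo a b, f.eval x ≠ 0) {x y : ℝ}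
    (hx : x ∈ Set.Ioo a b) (hy : y ∈ Set.Ioo a b) : 0 < f.eval x * f.eval y := by
  have hpre : IsPreconnected (Set.Ioo a b) := isPreconnected_Ioo
  by_contra hneg
  have hneg' := lt_of_le_of_ne (not_lt.1 hneg) (mul_ne_zero (h x hx) (h y hy))
  have hc : ContinuousOn (fun x => f.eval x) (Set.Ioo a b) := f.continuous.continuousOn
  rcases mul_neg_iff.1 hneg' with ⟨h1, h2⟩ | ⟨h1, h2⟩
  · obtain ⟨z, hz, hz0⟩ := hpre.intermediate_value hy hx hc ⟨h2.le, h1.le⟩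
    exact h z hz hz0
  · obtain ⟨z, hz, hz0⟩ := hpre.intermediate_value hx hy hc ⟨h1.le, h2.le⟩
    exact h z hz hz0

/-- Mean value theorem in signed form. -/
lemma exists_slope {I : Set ℝ} (hI : I.OrdConnected) {f f' : ℝ → ℝ}
    (hf : ∀ x ∈ I, HasDerivAt f (f' x) x) {x y : ℝ} (hx : x ∈ I) (hy : y ∈ I) (hxy : x ≠ y) :
    ∃ z ∈ I, f x - f y = f' z * (x - y) := by
  have aux : ∀ s ∈ I, ∀ t ∈ I, s < t → ∃ z ∈ I, f t - f s = f' z * (t - s) := by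
    intro s hs t ht hst
    have hsub : Set.Icc s t ⊆ I := hI.out hs ht
    obtain ⟨z, hz, e⟩ := exists_hasDerivAt_eq_slope f f' hst
      (fun z hz => (hf z (hsub hz)).continuousAt.continuousWithinAt)
      (fun z hz => hf z (hsub (Set.Ioo_subset_Icc_self hz)))
    refine ⟨z, hsub (Set.Ioo_subset_Icc_self hz), ?_⟩
    rw [e, div_mul_cancel₀ _ (sub_ne_zero.2 hst.ne')]
  rcases lt_or_gt_of_ne hxy with h | h
  · obtain ⟨z, hz, e⟩ := aux x hx y hy h
    exact ⟨z, hz, by linarith⟩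
  · exact aux y hy x hx h

/-- The count for one gap `(a, b)` between consecutive zeros of `p'`: parity and the bound by three
are applied between the zero `c` of `p` and the zero `d` of `p''` in that gap. -/
lemma ZIcount_Hk_interval {p : ℝ[X]} {S : Finset ℝ} (h : SimpleRooted (derivative p) S)
    (hS : 1 < S.card) {κ : ℝ} (hκ : 0 ≤ κ) {a b : ℝ} (hab : a < b) (ha : a ∈ S) (hb : b ∈ S)
    (hI : ∀ x ∈ Set.Ioo a b, x ∉ S) (hzero : ∃ x ∈ Set.Ioo a b, p.IsRoot x) :
    ZIcount (Set.Ioo a b) (Hk κ p) = 0 ∨ ZIcount (Set.Ioo a b) (Hk κ p) = 2 := by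
  obtain ⟨c, hc, hpc⟩ := hzero
  replace hpc : p.eval c = 0 := hpc
  set q := derivative p with hq
  have hqI : ∀ x ∈ Set.Ioo a b, q.eval x ≠ 0 := fun x hx h0 =>
    hI x hx ((h.eval_eq_zero_iff x).1 h0)
  obtain ⟨d, hd, hqd⟩ : ∃ d ∈ Set.Ioo a b, (derivative q).eval d = 0 :=
    exists_hasDerivAt_eq_zero hab q.continuous.continuousOn
      (((h.eval_eq_zero_iff a).2 ha).trans ((h.eval_eq_zero_iff b).2 hb).symm)
      (fun x _ => q.hasDerivAt x)
  have hp_sign : ∀ x ∈ Set.Ioo a b, x ≠ c → 0 < p.eval x * q.eval x * (x - c) := by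
    intro x hx hxc
    obtain ⟨z, hz, e⟩ := exists_slope Set.ordConnected_Ioo (fun x _ => p.hasDerivAt x) hx hc hxc
    rw [hpc, sub_zero] at e
    have h1 := mul_pos_of_ne_zero hqI hz hx
    have h2 : 0 < (x - c) ^ 2 := by have := sub_ne_zero.2 hxc; positivity
    have e' : p.eval x * q.eval x * (x - c) = (q.eval z * q.eval x) * (x - c) ^ 2 := by
      rw [e]; ring
    rw [e']; positivity
  have hq_sign : ∀ x ∈ Set.Ioo a b, x ≠ d → (derivative q).eval x * q.eval x * (x - d) < 0 := by
    intro x hx hxd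
    obtain ⟨z, hz, e⟩ := exists_slope Set.ordConnected_Ioo
      (fun x hx => ((derivative q).hasDerivAt x).fun_div (q.hasDerivAt x) (hqI x hx)) hx hd hxd
    have h0 := hqI x hx
    have h0z := hqI z hz
    have h1 := h.laguerre ⟨a, ha⟩ (hI z hz)
    rw [hqd, zero_div, sub_zero, div_eq_iff h0] at e
    have h2 : 0 < (x - d) ^ 2 := by have := sub_ne_zero.2 hxd; positivity
    have h3 : 0 < q.eval x ^ 2 / q.eval z ^ 2 := by positivity
    have e' : (derivative q).eval x * q.eval x * (x - d)
        = (q.eval z * (derivative (derivative q)).eval z - (derivative q).eval z ^ 2)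
          * ((q.eval x ^ 2 / q.eval z ^ 2) * (x - d) ^ 2) := by
      rw [e]; ring
    rw [e']
    exact mul_neg_of_neg_of_pos h1 (by positivity)
  rcases hκ.eq_or_lt with rfl | hκ
  -- for `κ = 0` the polynomial is `-p p''`, with exactly the simple zeros `c` and `d`
  · right
    have hp0 : p ≠ 0 := by rintro rfl; exact h.lc (by simp [hq])
    have hq0 : q ≠ 0 := fun h0 => h.lc (by simp [h0])
    have hL : ∀ x ∈ Set.Ioo a b,
        (q * derivative (derivative q) - derivative q ^ 2).eval x ≠ 0 := fun x hx => by
      simpa using (h.laguerre ⟨a, ha⟩ (hI x hx)).ne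
    have hL0 : q * derivative (derivative q) - derivative q ^ 2 ≠ 0 := fun h0 =>
      hL c hc (by rw [h0, eval_zero])
    have hq'0 : derivative q ≠ 0 := by
      intro h0; apply hL0; simp [h0]
    have e : Hk 0 p = (-p) * derivative q := by simp [Hk, hq]
    rw [e, ZIcount_mul (mul_ne_zero (neg_ne_zero.2 hp0) hq'0)]
    have h1 : ZIcount (Set.Ioo a b) (-p) ≤ ZIcount (Set.Ioo a b) q + 1 :=
      ZIcount_le_of_wronskian (Q := 1) (E := -1) hq0 (by simp) (by simp) (by simp [hq])
    rw [ZIcount_eq_zero hqI] at h1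
    have h2 : ZIcount (Set.Ioo a b) (derivative q) ≤
        ZIcount (Set.Ioo a b) (q * derivative (derivative q) - derivative q ^ 2) + 1 :=
      ZIcount_le_of_wronskian (Q := q) (E := 1) hL0 hqI (by simp) (by ring)
    rw [ZIcount_eq_zero hL] at h2
    have h3 := ZIcount_pos (neg_ne_zero.2 hp0) hc (by simpa using hpc)
    have h4 := ZIcount_pos hq'0 hd hqd
    omega
  · have evH : ∀ x, (Hk κ p).eval x = κ * q.eval x ^ 2 - p.eval x * (derivative q).eval x := by
      intro x; simp [Hk, hq]
    -- positivity at `c` and `d` makes the number of roots between them even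
    have hHc : 0 < (Hk κ p).eval c := by
      have := hqI c hc
      rw [evH, hpc]; simp only [zero_mul, sub_zero]; positivity
    have hHd : 0 < (Hk κ p).eval d := by
      have := hqI d hd
      rw [evH, hqd]; simp only [mul_zero, sub_zero]; positivity
    -- a zero of `H` has `p p'' > 0`, which forces it to lie strictly between `c` and `d`
    have hbetween : ∀ x ∈ Set.Ioo a b, (Hk κ p).IsRoot x → (x - c) * (x - d) < 0 := by
      intro x hx hr
      have hr : (Hk κ p).eval x = 0 := hr
      have hxc : x ≠ c := by rintro rfl; exact hHc.ne' hr
      have hxd : x ≠ d := by rintro rfl; exact hHd.ne' hr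
      have h0 := hqI x hx
      have h1 := mul_neg_of_pos_of_neg (hp_sign x hx hxc) (hq_sign x hx hxd)
      rw [evH] at hr
      have h2 : 0 < κ * q.eval x ^ 2 * q.eval x ^ 2 := by positivity
      have e : p.eval x * q.eval x * (x - c) * ((derivative q).eval x * q.eval x * (x - d))
          = (κ * q.eval x ^ 2 * q.eval x ^ 2) * ((x - c) * (x - d)) := by
        linear_combination (-(q.eval x ^ 2 * (x - c) * (x - d))) * hr
      rw [e] at h1
      by_contra hcon
      exact absurd h1 (not_lt.2 (mul_nonneg h2.le (not_lt.1 hcon)))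
    have hsub : Set.Ioo (min c d) (max c d) ⊆ Set.Ioo a b := fun x hx =>
      ⟨(lt_min hc.1 hd.1).trans hx.1, hx.2.trans (max_lt hc.2 hd.2)⟩
    have hcongr : ZIcount (Set.Ioo a b) (Hk κ p)
        = ZIcount (Set.Ioo (min c d) (max c d)) (Hk κ p) := by
      refine ZIcount_congr fun x hr => ⟨fun hx => ?_, fun hx => hsub hx⟩
      rcases mul_neg_iff.1 (hbetween x hx hr) with ⟨h1, h2⟩ | ⟨h1, h2⟩
      · exact ⟨min_lt_iff.2 (Or.inl (by linarith)), lt_max_iff.2 (Or.inr (by linarith))⟩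
      · exact ⟨min_lt_iff.2 (Or.inr (by linarith)), lt_max_iff.2 (Or.inl (by linarith))⟩
    rw [hcongr]
    rcases eq_or_ne c d with rfl | hcd
    · left
      exact ZIcount_eq_zero (by simp)
    have hlt : min c d < max c d := min_lt_max.2 hcd
    have h3 : ZIcount (Set.Ioo (min c d) (max c d)) (Hk κ p) ≤ 3 := by
      refine ZIcount_Hk_le_three h hS hκ.ne' hlt (fun x hx => hI x (hsub hx)) fun x hx h0 => ?_
      have hxd : x ≠ d := by
        rintro rfl
        rcases le_total c x with h1 | h1
        · exact (max_eq_right h1 ▸ hx.2).ne rfl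
        · exact (min_eq_right h1 ▸ hx.1).ne rfl
      have := hq_sign x (hsub hx) hxd
      rw [← hq] at h0
      rw [h0] at this
      simp at this
    have hprod : 0 < (Hk κ p).eval (min c d) * (Hk κ p).eval (max c d) := by
      rcases le_total c d with h1 | h1
      · rw [min_eq_left h1, max_eq_right h1]; positivity
      · rw [min_eq_right h1, max_eq_left h1]; positivity
    have heven := (even_ZIcount_iff hlt _ (Hk κ p) le_rfl hprod.ne').2 hprod
    obtain ⟨r, hr⟩ := heven
    omega

/-- A polynomial with at least as many distinct roots as its degree is, up to a constant, the
product of the corresponding linear factors. -/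
lemma simpleRooted_of_card {q : ℝ[X]} (hq : q ≠ 0) {S : Finset ℝ}
    (hS : ∀ x ∈ S, q.IsRoot x) (hcard : q.natDegree ≤ S.card) : SimpleRooted q S := by
  have hle : S.val ≤ q.roots :=
    (Multiset.le_iff_subset S.nodup).2 fun x hx => (mem_roots hq).2 (hS x hx)
  have heq : S.val = q.roots :=
    Multiset.eq_of_le_of_card_le hle ((card_roots' q).trans hcard)
  have hc : Multiset.card q.roots = q.natDegree :=
    le_antisymm (card_roots' q) (by rw [← heq]; exact hcard)
  refine ⟨leadingCoeff_ne_zero.2 hq, ?_⟩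
  conv_lhs => rw [← C_leadingCoeff_mul_prod_multiset_X_sub_C hc, ← heq]
  rfl

theorem stmt16 (n : ℕ) (hn : 2 ≤ n) (p : ℝ[X]) (hdeg : p.natDegree = n)
    (hsimple : ∀ x : ℝ, p.IsRoot x → rootMultiplicity x p = 1)
    (ξ : ℕ → ℝ)
    (hmono : ∀ i j, 1 ≤ i → i < j → j ≤ n - 1 → ξ i < ξ j)
    (hroot : ∀ k, 1 ≤ k → k ≤ n - 1 → (derivative p).IsRoot (ξ k))
    (hall : ∀ x : ℝ, (derivative p).IsRoot x → ∃ k, 1 ≤ k ∧ k ≤ n - 1 ∧ x = ξ k)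
    (κ : ℝ) (hκ0 : 0 ≤ κ) (hκ : κ < ((n : ℝ) - 1) / n)
    (k : ℕ) (hk1 : 2 ≤ k) (hk2 : k ≤ n - 1)
    (hzero : ∃ x ∈ Set.Ioo (ξ (k - 1)) (ξ k), p.IsRoot x) :
    ZIcount (Set.Ioo (ξ (k - 1)) (ξ k)) (Hk κ p) = 0 ∨
      ZIcount (Set.Ioo (ξ (k - 1)) (ξ k)) (Hk κ p) = 2 := by
  classical
  -- the `ξᵢ` are `n - 1 = deg p'` distinct roots of `p'`, hence all of them
  set S : Finset ℝ := (Finset.Icc 1 (n - 1)).image ξ with hSdef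
  have hinj : Set.InjOn ξ (Finset.Icc 1 (n - 1)) := by
    intro i hi j hj hij
    simp only [Finset.coe_Icc, Set.mem_Icc] at hi hj
    rcases lt_trichotomy i j with h | h | h
    · exact absurd hij (hmono i j hi.1 h hj.2).ne
    · exact h
    · exact absurd hij (hmono j i hj.1 h hi.2).ne'
  have hcard : S.card = n - 1 := by
    rw [hSdef, Finset.card_image_of_injOn hinj, Nat.card_Icc]; omega
  have hnd : (derivative p).natDegree = n - 1 := by rw [natDegree_derivative, hdeg]
  have hq0 : derivative p ≠ 0 := by
    intro h0; rw [h0, natDegree_zero] at hnd; omega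
  have hmem : ∀ i, 1 ≤ i → i ≤ n - 1 → ξ i ∈ S := fun i h1 h2 =>
    Finset.mem_image.2 ⟨i, Finset.mem_Icc.2 ⟨h1, h2⟩, rfl⟩
  have hSR : SimpleRooted (derivative p) S := by
    refine simpleRooted_of_card hq0 (fun x hx => ?_) (by omega)
    obtain ⟨i, hi, rfl⟩ := Finset.mem_image.1 hx
    rw [Finset.mem_Icc] at hi
    exact hroot i hi.1 hi.2
  refine ZIcount_Hk_interval hSR (by omega) hκ0 (hmono _ _ (by omega) (by omega) hk2)
    (hmem _ (by omega) (by omega)) (hmem _ (by omega) hk2) (fun x hx hxS => ?_) hzero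
  obtain ⟨i, hi, rfl⟩ := Finset.mem_image.1 hxS
  rw [Finset.mem_Icc] at hi
  rcases lt_or_ge i k with h | h
  · rcases (show i ≤ k - 1 by omega).eq_or_lt with h' | h'
    · exact hx.1.ne (by rw [h'])
    · exact lt_asymm hx.1 (hmono _ _ hi.1 h' (by omega))
  · rcases h.eq_or_lt with h' | h'
    · exact hx.2.ne (by rw [h'])
    · exact lt_asymm hx.2 (hmono _ _ (by omega) h' hi.2)
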